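/- arXiv:1705.06884 — 2 statements merged into one kernel-verified Lean document; each statement's English description precedes it below -/
import Mathlib

section
/- There exists a constant c > 0 such that for all y₁, y₂ ∈ Y and all W₁, W₂ ∈ C, max{‖h*(y₁,W₁) − h*(y₂,W₂)‖₂, ‖r*(y₁,W₁) − r*(y₂,W₂)‖₂} ≤ c ( ‖y₁ − y₂‖₂ + ‖W₁ − W₂‖_F ); that is, the minimizer map (y,W) ↦ (h*(y,W), r*(y,W)) is Lipschitz on Y × C. -/
open scoped RealInnerProductSpace ENNReal

noncomputable section

/-- `ℝ^d` with the Euclidean norm. -/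
abbrev Vec (d : ℕ) := EuclideanSpace ℝ (Fin d)

/-- `ℝ^{d×k}` with the Frobenius (Euclidean) norm, viewed as a Euclidean space. -/
abbrev Mat (d k : ℕ) := EuclideanSpace ℝ (Fin d × Fin k)

/-- Matrix-vector product `W h`. -/
def matMulVec {d k : ℕ} (W : Mat d k) (h : Vec k) : Vec d :=
  (WithLp.equiv 2 (Fin d → ℝ)).symm (fun i => ∑ j, W (i, j) * h j)

/-- The function `ℓ̃₂(y, W, h, r) = (1/2)‖y − Wh − r‖² + φ(h) + ϕ(r)`, with values in `[0,∞]`. -/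
def ell2t {d k : ℕ} (φ : Vec k → ℝ≥0∞) (ϕ' : Vec d → ℝ≥0∞)
    (y : Vec d) (W : Mat d k) (h : Vec k) (r : Vec d) : ℝ≥0∞ :=
  ENNReal.ofReal (‖y - matMulVec W h - r‖ ^ 2 / 2) + φ h + ϕ' r

/-- Convexity for functions with values in `[0,∞]`. -/
def ConvexFnENN {E : Type*} [AddCommMonoid E] [Module ℝ E] (γ : E → ℝ≥0∞) : Prop :=
  ∀ x y : E, ∀ a b : ℝ, 0 ≤ a → 0 ≤ b → a + b = 1 →
    γ (a • x + b • y) ≤ ENNReal.ofReal a * γ x + ENNReal.ofReal b * γ y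

/-- The matrix `(W h + r − y) hᵀ`, the claimed gradient of `ℓ₂(y, ·)` at `W`
    (with `h = h*(y,W)`, `r = r*(y,W)`). -/
def gradFormula {d k : ℕ} (y : Vec d) (W : Mat d k) (h : Vec k) (r : Vec d) : Mat d k :=
  (WithLp.equiv 2 (Fin d × Fin k → ℝ)).symm
    (fun p => (matMulVec W h + r - y) p.1 * h p.2)

lemma mmv_apply {d k : ℕ} (W : Mat d k) (h : Vec k) (i : Fin d) :
    matMulVec W h i = ∑ j, W (i, j) * h j := rfl

lemma mmv_sub_left {d k : ℕ} (W V : Mat d k) (h : Vec k) :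
    matMulVec (W - V) h = matMulVec W h - matMulVec V h := by
  ext i
  simp [mmv_apply, sub_mul, Finset.sum_sub_distrib]

lemma mmv_sub_right {d k : ℕ} (W : Mat d k) (h g : Vec k) :
    matMulVec W (h - g) = matMulVec W h - matMulVec W g := by
  ext i
  simp [mmv_apply, mul_sub, Finset.sum_sub_distrib]

lemma mmv_norm {d k : ℕ} (W : Mat d k) (h : Vec k) :
    ‖matMulVec W h‖ ≤ ‖W‖ * ‖h‖ := by
  apply le_of_sq_le_sq _ (by positivity)
  rw [mul_pow, EuclideanSpace.norm_sq_eq, EuclideanSpace.norm_sq_eq, EuclideanSpace.norm_sq_eq,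
    Fintype.sum_prod_type, Finset.sum_mul]
  apply Finset.sum_le_sum
  intro i _
  simp only [Real.norm_eq_abs, sq_abs, mmv_apply]
  exact Finset.sum_mul_sq_le_sq_mul_sq _ _ _

lemma ell2t_real {d k : ℕ} {φ : Vec k → ℝ≥0∞} {ϕ' : Vec d → ℝ≥0∞}
    (y : Vec d) (W : Mat d k) {h : Vec k} {r : Vec d} (hp : φ h ≠ ⊤) (hq : ϕ' r ≠ ⊤) :
    ell2t φ ϕ' y W h r =
      ENNReal.ofReal (‖y - matMulVec W h - r‖ ^ 2 / 2 + (φ h).toReal + (ϕ' r).toReal) := by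
  rw [ENNReal.ofReal_add (by positivity) (by positivity),
    ENNReal.ofReal_add (by positivity) (by positivity), ENNReal.ofReal_toReal hp,
    ENNReal.ofReal_toReal hq, ell2t]

lemma growth (A B Z : ℝ) (hA : 0 ≤ A) (hB : 0 ≤ B) (hZ : 0 ≤ Z) (m : ℝ≥0∞)
    (h1 : ENNReal.ofReal A ≤ m)
    (h2 : m + ENNReal.ofReal Z ≤ ENNReal.ofReal (1/2) * ENNReal.ofReal A
      + ENNReal.ofReal (1/2) * ENNReal.ofReal B) : A + 2 * Z ≤ B := by
  have h3 := (add_le_add_left h1 (ENNReal.ofReal Z)).trans h2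
  rw [← ENNReal.ofReal_mul (by norm_num), ← ENNReal.ofReal_mul (by norm_num),
    ← ENNReal.ofReal_add hA hZ, ← ENNReal.ofReal_add (by positivity) (by positivity),
    ENNReal.ofReal_le_ofReal_iff (by positivity)] at h3
  linarith

lemma quad {E : Type*} [NormedAddCommGroup E] [InnerProductSpace ℝ E] (a b c e : E) :
    (‖b‖ ^ 2 / 2 - ‖a‖ ^ 2 / 2) + (‖c‖ ^ 2 / 2 - ‖e‖ ^ 2 / 2)
      ≤ (‖(b - e) - (a - c)‖ * ‖b + e‖ + ‖a - c‖ * ‖(b + e) - (a + c)‖) / 2 := by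
  have h1 := real_inner_le_norm ((b - e) - (a - c)) (b + e)
  have h2 := real_inner_le_norm (a - c) ((b + e) - (a + c))
  have h3 : (‖b‖ ^ 2 / 2 - ‖a‖ ^ 2 / 2) + (‖c‖ ^ 2 / 2 - ‖e‖ ^ 2 / 2)
      = (inner ℝ ((b - e) - (a - c)) (b + e) + inner ℝ (a - c) ((b + e) - (a + c))) / 2 := by
    simp only [← real_inner_self_eq_norm_sq, inner_sub_left, inner_sub_right, inner_add_right]
    rw [real_inner_comm b e, real_inner_comm a c]
    ring
  linarith

lemma perturb {d k : ℕ} (K : ℝ) (hK : 1 ≤ K) (y₁ y₂ : Vec d) (W₁ W₂ : Mat d k)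
    (h₁ h₂ : Vec k) (r₁ r₂ : Vec d) (ky₁ : ‖y₁‖ ≤ K) (ky₂ : ‖y₂‖ ≤ K) (kW₁ : ‖W₁‖ ≤ K)
    (kW₂ : ‖W₂‖ ≤ K) (kh₁ : ‖h₁‖ ≤ K) (kh₂ : ‖h₂‖ ≤ K) (kr₂ : ‖r₂‖ ≤ K) (t : ℝ)
    (ht₁ : ‖h₁ - h₂‖ ≤ t) (ht₂ : ‖r₁ - r₂‖ ≤ t) :
    (‖y₁ - matMulVec W₁ h₂ - r₂‖ ^ 2 / 2 - ‖y₁ - matMulVec W₁ h₁ - r₁‖ ^ 2 / 2)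
      + (‖y₂ - matMulVec W₂ h₁ - r₁‖ ^ 2 / 2 - ‖y₂ - matMulVec W₂ h₂ - r₂‖ ^ 2 / 2)
      ≤ 5 * K ^ 2 * (‖y₁ - y₂‖ + ‖W₁ - W₂‖) * t := by
  have ht : 0 ≤ t := (norm_nonneg _).trans ht₁
  have hK0 : 0 ≤ K := by linarith
  have hKK : K ≤ K ^ 2 := by nlinarith
  refine (quad _ _ _ _).trans ?_
  have e1 : (y₁ - matMulVec W₁ h₂ - r₂) - (y₂ - matMulVec W₂ h₂ - r₂)
      - ((y₁ - matMulVec W₁ h₁ - r₁) - (y₂ - matMulVec W₂ h₁ - r₁))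
      = matMulVec (W₁ - W₂) (h₁ - h₂) := by
    simp only [mmv_sub_left, mmv_sub_right]; abel
  have e2 : (y₁ - matMulVec W₁ h₁ - r₁) - (y₂ - matMulVec W₂ h₁ - r₁)
      = (y₁ - y₂) - matMulVec (W₁ - W₂) h₁ := by
    simp only [mmv_sub_left]; abel
  have e3 : (y₁ - matMulVec W₁ h₂ - r₂) + (y₂ - matMulVec W₂ h₂ - r₂)
      - ((y₁ - matMulVec W₁ h₁ - r₁) + (y₂ - matMulVec W₂ h₁ - r₁))
      = (matMulVec W₁ (h₁ - h₂) + (r₁ - r₂)) + (matMulVec W₂ (h₁ - h₂) + (r₁ - r₂)) := by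
    simp only [mmv_sub_right]; abel
  rw [e1, e2, e3]
  have mb : ∀ (W : Mat d k) (h : Vec k) (a b : ℝ), ‖W‖ ≤ a → ‖h‖ ≤ b →
      ‖matMulVec W h‖ ≤ a * b := fun W h a b ha hb =>
    (mmv_norm W h).trans (mul_le_mul ha hb (norm_nonneg _) ((norm_nonneg _).trans ha))
  have b1 : ‖matMulVec (W₁ - W₂) (h₁ - h₂)‖ ≤ ‖W₁ - W₂‖ * t := mb _ _ _ _ le_rfl ht₁
  have b2 : ‖(y₁ - y₂) - matMulVec (W₁ - W₂) h₁‖ ≤ K * (‖y₁ - y₂‖ + ‖W₁ - W₂‖) := by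
    have := norm_sub_le (y₁ - y₂) (matMulVec (W₁ - W₂) h₁)
    have := mb (W₁ - W₂) h₁ _ _ le_rfl kh₁
    nlinarith [norm_nonneg (y₁ - y₂)]
  have res : ∀ (y : Vec d) (W : Mat d k), ‖y‖ ≤ K → ‖W‖ ≤ K →
      ‖y - matMulVec W h₂ - r₂‖ ≤ 3 * K ^ 2 := by
    intro y W hy hW
    have := norm_sub_le (y - matMulVec W h₂) r₂
    have := norm_sub_le y (matMulVec W h₂)
    have := mb W h₂ _ _ hW kh₂
    nlinarith
  have b3 : ‖(y₁ - matMulVec W₁ h₂ - r₂) + (y₂ - matMulVec W₂ h₂ - r₂)‖ ≤ 6 * K ^ 2 := by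
    have := norm_add_le (y₁ - matMulVec W₁ h₂ - r₂) (y₂ - matMulVec W₂ h₂ - r₂)
    have := res y₁ W₁ ky₁ kW₁
    have := res y₂ W₂ ky₂ kW₂
    linarith
  have lin : ∀ W : Mat d k, ‖W‖ ≤ K → ‖matMulVec W (h₁ - h₂) + (r₁ - r₂)‖ ≤ 2 * K * t := by
    intro W hW
    have := norm_add_le (matMulVec W (h₁ - h₂)) (r₁ - r₂)
    have := mb W (h₁ - h₂) _ _ hW ht₁
    nlinarith
  have b4 := (norm_add_le (matMulVec W₁ (h₁ - h₂) + (r₁ - r₂))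
    (matMulVec W₂ (h₁ - h₂) + (r₁ - r₂))).trans (add_le_add (lin W₁ kW₁) (lin W₂ kW₂))
  have c1 := mul_le_mul b1 b3 (norm_nonneg _) (by positivity)
  have c2 := mul_le_mul b2 b4 (norm_nonneg _) (by positivity)
  have c3 : 0 ≤ K ^ 2 * ‖y₁ - y₂‖ * t := by positivity
  nlinarith

/-- Lipschitz continuity of the minimizer map on Y × C. -/
theorem minimizer_map_lipschitz {d k : ℕ}
    (φ : Vec k → ℝ≥0∞) (ϕ' : Vec d → ℝ≥0∞)
    (H : Set (Vec k)) (R : Set (Vec d)) (ν : ℝ) (hν : 0 < ν)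
    (hφconv : ConvexFnENN φ) (hφproper : ∃ h, φ h ≠ ⊤) (hφclosed : LowerSemicontinuous φ)
    (hϕconv : ConvexFnENN ϕ') (hϕproper : ∃ r, ϕ' r ≠ ⊤) (hϕclosed : LowerSemicontinuous ϕ')
    (hHne : H.Nonempty) (hHconv : Convex ℝ H) (hHcomp : IsCompact H)
    (hRne : R.Nonempty) (hRconv : Convex ℝ R) (hRcomp : IsCompact R)
    -- joint ν-strong convexity of `ℓ̃₂(y, W, ·, ·)` on `H × R`
    (hsc : ∀ (y : Vec d) (W : Mat d k), ∀ h₁ ∈ H, ∀ h₂ ∈ H, ∀ r₁ ∈ R, ∀ r₂ ∈ R,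
      ∀ a b : ℝ, 0 ≤ a → 0 ≤ b → a + b = 1 →
        ell2t φ ϕ' y W (a • h₁ + b • h₂) (a • r₁ + b • r₂)
            + ENNReal.ofReal (ν / 2 * (a * b) * (‖h₁ - h₂‖ ^ 2 + ‖r₁ - r₂‖ ^ 2))
          ≤ ENNReal.ofReal a * ell2t φ ϕ' y W h₁ r₁ + ENNReal.ofReal b * ell2t φ ϕ' y W h₂ r₂)
    -- `(hstar y W, rstar y W)` is the (unique) minimizer of `ℓ̃₂(y, W, ·, ·)` over `H × R`
    (hstar : Vec d → Mat d k → Vec k) (rstar : Vec d → Mat d k → Vec d)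
    (hstar_mem : ∀ y W, hstar y W ∈ H) (rstar_mem : ∀ y W, rstar y W ∈ R)
    (hmin : ∀ (y : Vec d) (W : Mat d k), ∀ h ∈ H, ∀ r ∈ R,
        ell2t φ ϕ' y W (hstar y W) (rstar y W) ≤ ell2t φ ϕ' y W h r)
    (huniq : ∀ (y : Vec d) (W : Mat d k), ∀ h ∈ H, ∀ r ∈ R,
        (∀ h' ∈ H, ∀ r' ∈ R, ell2t φ ϕ' y W h r ≤ ell2t φ ϕ' y W h' r') →
        h = hstar y W ∧ r = rstar y W)
    (Y : Set (Vec d)) (hYcomp : IsCompact Y)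
    (C : Set (Mat d k)) (hCcomp : IsCompact C) (hCconv : Convex ℝ C) :
    ∃ c : ℝ, 0 < c ∧ ∀ y₁ ∈ Y, ∀ y₂ ∈ Y, ∀ W₁ ∈ C, ∀ W₂ ∈ C,
      max ‖hstar y₁ W₁ - hstar y₂ W₂‖ ‖rstar y₁ W₁ - rstar y₂ W₂‖
        ≤ c * (‖y₁ - y₂‖ + ‖W₁ - W₂‖) := by
  obtain ⟨K₁, hK₁⟩ := hHcomp.isBounded.exists_norm_le
  obtain ⟨K₂, hK₂⟩ := hRcomp.isBounded.exists_norm_le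
  obtain ⟨K₃, hK₃⟩ := hYcomp.isBounded.exists_norm_le
  obtain ⟨K₄, hK₄⟩ := hCcomp.isBounded.exists_norm_le
  obtain ⟨K, hK, k1, k2, k3, k4⟩ : ∃ K : ℝ, 1 ≤ K ∧ K₁ ≤ K ∧ K₂ ≤ K ∧ K₃ ≤ K ∧ K₄ ≤ K :=
    ⟨max 1 (max K₁ (max K₂ (max K₃ K₄))), by simp⟩
  refine ⟨10 * K ^ 2 / ν, by positivity, ?_⟩
  intro y₁ hy₁ y₂ hy₂ W₁ hW₁ W₂ hW₂
  by_cases hfin : ∃ h ∈ H, ∃ r ∈ R, φ h ≠ ⊤ ∧ ϕ' r ≠ ⊤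
  · obtain ⟨h₀, hh₀, r₀, hr₀, hp₀, hq₀⟩ := hfin
    have fin : ∀ y W, φ (hstar y W) ≠ ⊤ ∧ ϕ' (rstar y W) ≠ ⊤ := by
      intro y W
      have h1 := hmin y W h₀ hh₀ r₀ hr₀
      rw [ell2t_real y W hp₀ hq₀] at h1
      have h2 := ne_top_of_le_ne_top ENNReal.ofReal_ne_top h1
      simp only [ell2t, ne_eq, ENNReal.add_eq_top, not_or] at h2
      exact ⟨h2.1.2, h2.2⟩
    have gr : ∀ y W h r, h ∈ H → r ∈ R → φ h ≠ ⊤ → ϕ' r ≠ ⊤ →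
        (‖y - matMulVec W (hstar y W) - rstar y W‖ ^ 2 / 2 + (φ (hstar y W)).toReal
          + (ϕ' (rstar y W)).toReal)
          + 2 * (ν / 2 * (1 / 2 * (1 / 2)) * (‖hstar y W - h‖ ^ 2 + ‖rstar y W - r‖ ^ 2))
        ≤ ‖y - matMulVec W h - r‖ ^ 2 / 2 + (φ h).toReal + (ϕ' r).toReal := by
      intro y W h r hh hr hp hq
      have s := hsc y W _ (hstar_mem y W) h hh _ (rstar_mem y W) r hr (1/2) (1/2)
        (by norm_num) (by norm_num) (by norm_num)
      have m := hmin y W _ (hHconv (hstar_mem y W) hh (a := 1/2) (b := 1/2)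
        (by norm_num) (by norm_num) (by norm_num)) _
        (hRconv (rstar_mem y W) hr (a := 1/2) (b := 1/2)
        (by norm_num) (by norm_num) (by norm_num))
      rw [ell2t_real y W (fin y W).1 (fin y W).2] at s m
      rw [ell2t_real y W hp hq] at s
      exact growth _ _ _ (by positivity) (by positivity) (by positivity) _ m s
    have g1 := gr y₁ W₁ _ _ (hstar_mem y₂ W₂) (rstar_mem y₂ W₂) (fin y₂ W₂).1 (fin y₂ W₂).2
    have g2 := gr y₂ W₂ _ _ (hstar_mem y₁ W₁) (rstar_mem y₁ W₁) (fin y₁ W₁).1 (fin y₁ W₁).2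
    rw [norm_sub_rev (hstar y₂ W₂), norm_sub_rev (rstar y₂ W₂)] at g2
    have p := perturb K hK y₁ y₂ W₁ W₂ (hstar y₁ W₁) (hstar y₂ W₂) (rstar y₁ W₁) (rstar y₂ W₂)
      ((hK₃ _ hy₁).trans k3) ((hK₃ _ hy₂).trans k3) ((hK₄ _ hW₁).trans k4) ((hK₄ _ hW₂).trans k4)
      ((hK₁ _ (hstar_mem _ _)).trans k1) ((hK₁ _ (hstar_mem _ _)).trans k1)
      ((hK₂ _ (rstar_mem _ _)).trans k2) _ (le_max_left _ _) (le_max_right _ _)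
    have ht : (max ‖hstar y₁ W₁ - hstar y₂ W₂‖ ‖rstar y₁ W₁ - rstar y₂ W₂‖) ^ 2
        ≤ ‖hstar y₁ W₁ - hstar y₂ W₂‖ ^ 2 + ‖rstar y₁ W₁ - rstar y₂ W₂‖ ^ 2 := by
      rcases max_choice ‖hstar y₁ W₁ - hstar y₂ W₂‖ ‖rstar y₁ W₁ - rstar y₂ W₂‖ with h | h <;>
        rw [h] <;> nlinarith [sq_nonneg ‖hstar y₁ W₁ - hstar y₂ W₂‖,
          sq_nonneg ‖rstar y₁ W₁ - rstar y₂ W₂‖]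
    have ht0 : 0 ≤ max ‖hstar y₁ W₁ - hstar y₂ W₂‖ ‖rstar y₁ W₁ - rstar y₂ W₂‖ :=
      (norm_nonneg _).trans (le_max_left _ _)
    generalize max ‖hstar y₁ W₁ - hstar y₂ W₂‖ ‖rstar y₁ W₁ - rstar y₂ W₂‖ = t at *
    have hT : 0 ≤ ‖y₁ - y₂‖ + ‖W₁ - W₂‖ := by positivity
    generalize ‖y₁ - y₂‖ + ‖W₁ - W₂‖ = T at *
    have key : ν / 2 * t ^ 2 ≤ 5 * K ^ 2 * T * t := by
      have := mul_le_mul_of_nonneg_left ht (by positivity : 0 ≤ ν / 2)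
      linarith
    rw [div_mul_eq_mul_div, le_div_iff₀ hν]
    rcases ht0.eq_or_lt with h0 | h0
    · rw [← h0]; simp; positivity
    · have : ν / 2 * t ≤ 5 * K ^ 2 * T := by
        apply le_of_mul_le_mul_right _ h0
        linarith [key, sq t]
      linarith
  · push Not at hfin
    have top : ∀ y W, ∀ h ∈ H, ∀ r ∈ R, ell2t φ ϕ' y W h r = ⊤ := by
      intro y W h hh r hr
      by_cases hp : φ h = ⊤
      · simp [ell2t, hp]
      · simp [ell2t, hfin h hh r hr hp]
    obtain ⟨e1, e2⟩ := huniq y₂ W₂ _ (hstar_mem y₁ W₁) _ (rstar_mem y₁ W₁)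
      (fun h' hh' r' hr' => by rw [top y₂ W₂ h' hh' r' hr']; exact le_top)
    rw [e1, e2]
    simp
    positivity
end
end

section
/- Let f′ = g + ψ′ on a Euclidean space ℰ, where g: ℰ → ℝ is differentiable with L-Lipschitz gradient and ψ′: ℰ → [0,∞] is proper, closed and convex. Fix η > 0, a point W ∈ ℰ and a direction V ∈ ℰ, and set W⁺ = prox_{ηψ′}(W − ηV) and W̃ = prox_{ηψ′}(W − η∇g(W)). Then f′(W⁺) ≤ f′(W) + ⟨W⁺ − W̃, ∇g(W) − V⟩ + (L/2 − 1/(2η)) ‖W⁺ − W‖² + (L − 1/(2η)) ‖W̃ − W‖² − (1/(2η)) ‖W⁺ − W̃‖². -/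
open scoped RealInnerProductSpace ENNReal

noncomputable section

/-- `p = prox_{ηγ}(x)`, i.e. `p` minimizes `u ↦ ηγ(u) + (1/2)‖u − x‖²`. -/
def IsProxPt {E : Type*} [NormedAddCommGroup E] (γ : E → ℝ≥0∞) (η : ℝ) (x p : E) : Prop :=
  ∀ u : E, ENNReal.ofReal η * γ p + ENNReal.ofReal (‖p - x‖ ^ 2 / 2)
      ≤ ENNReal.ofReal η * γ u + ENNReal.ofReal (‖u - x‖ ^ 2 / 2)

theorem prox_ineq_aux {E : Type*} [NormedAddCommGroup E] [InnerProductSpace ℝ E]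
    (γ : E → ℝ≥0∞) (hconv : ConvexFnENN γ) (η : ℝ) (hη : 0 < η) (x p z : E)
    (h : IsProxPt γ η x p) (hp : γ p ≠ ⊤) (hz : γ z ≠ ⊤) :
    η * (γ p).toReal ≤ η * (γ z).toReal + ⟪p - x, z - p⟫ := by
  have key : ∀ t : ℝ, 0 < t → t ≤ 1 →
      0 ≤ (η * (γ z).toReal + ⟪p - x, z - p⟫ - η * (γ p).toReal) + t * (‖z - p‖ ^ 2 / 2) := by
    intro t ht ht1
    have h1 := h ((1 - t) • p + t • z)
    have h2 := hconv p z (1 - t) t (by linarith) ht.le (by ring)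
    have ht' : 0 ≤ 1 - t := by linarith
    have h3 : ENNReal.ofReal η * γ p + ENNReal.ofReal (‖p - x‖ ^ 2 / 2) ≤
        ENNReal.ofReal η * (ENNReal.ofReal (1 - t) * γ p + ENNReal.ofReal t * γ z)
        + ENNReal.ofReal (‖(1 - t) • p + t • z - x‖ ^ 2 / 2) :=
      h1.trans (by gcongr)
    obtain ⟨a, ha⟩ : ∃ a : ℝ, a = (γ p).toReal := ⟨_, rfl⟩
    obtain ⟨b, hb⟩ : ∃ b : ℝ, b = (γ z).toReal := ⟨_, rfl⟩
    have ha0 : 0 ≤ a := ha ▸ ENNReal.toReal_nonneg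
    have hb0 : 0 ≤ b := hb ▸ ENNReal.toReal_nonneg
    have hpa : γ p = ENNReal.ofReal a := by rw [ha, ENNReal.ofReal_toReal hp]
    have hzb : γ z = ENNReal.ofReal b := by rw [hb, ENNReal.ofReal_toReal hz]
    rw [← ha, ← hb]
    rw [hpa, hzb, ← ENNReal.ofReal_mul hη.le, ← ENNReal.ofReal_mul ht', ← ENNReal.ofReal_mul ht.le,
      ← ENNReal.ofReal_add (by positivity) (by positivity),
      ← ENNReal.ofReal_add (by positivity) (by positivity),
      ← ENNReal.ofReal_mul hη.le,
      ← ENNReal.ofReal_add (by positivity) (by positivity),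
      ENNReal.ofReal_le_ofReal_iff (by positivity)] at h3
    have h4 : (1 - t) • p + t • z - x = (p - x) + t • (z - p) := by module
    rw [h4, norm_add_sq_real, inner_smul_right, norm_smul, Real.norm_eq_abs, mul_pow, sq_abs] at h3
    have h5 : 0 ≤ t * ((η * b + ⟪p - x, z - p⟫ - η * a) + t * (‖z - p‖ ^ 2 / 2)) := by
      linarith
    exact nonneg_of_mul_nonneg_right h5 ht
  by_contra hc
  push Not at hc
  set c := η * (γ p).toReal - (η * (γ z).toReal + ⟪p - x, z - p⟫) with hcdef
  have hc0 : 0 < c := by linarith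
  have hN : 0 ≤ ‖z - p‖ ^ 2 / 2 := by positivity
  set N := ‖z - p‖ ^ 2 / 2
  have hk := key (c / (c + N + 1)) (by positivity) (by rw [div_le_one (by positivity)]; linarith)
  have : c / (c + N + 1) * N < c := by
    rw [div_mul_eq_mul_div, div_lt_iff₀ (by positivity)]
    nlinarith
  linarith

theorem descent_aux {E : Type*} [NormedAddCommGroup E] [InnerProductSpace ℝ E] [CompleteSpace E]
    (g : E → ℝ) (L : ℝ) (hdiff : Differentiable ℝ g)
    (hlip : ∀ a b : E, ‖gradient g a - gradient g b‖ ≤ L * ‖a - b‖) (x y : E) :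
    g y ≤ g x + ⟪gradient g x, y - x⟫ + L / 2 * ‖y - x‖ ^ 2 := by
  set d := y - x with hd
  let h : ℝ → ℝ := fun t => g (x + t • d) - t * ⟪gradient g x, d⟫ - t ^ 2 * (L / 2 * ‖d‖ ^ 2)
  have hder : ∀ t : ℝ, HasDerivAt h
      (⟪gradient g (x + t • d), d⟫ - ⟪gradient g x, d⟫ - 2 * t * (L / 2 * ‖d‖ ^ 2)) t := by
    intro t
    have h1 : HasDerivAt (fun t : ℝ => x + t • d) d t := by
      simpa using ((hasDerivAt_id t).smul_const d).const_add x
    have h2 := (hdiff (x + t • d)).hasGradientAt.hasFDerivAt.comp_hasDerivAt t h1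
    have h3 := (hasDerivAt_id t).mul_const ⟪gradient g x, d⟫
    have h4 := (hasDerivAt_pow 2 t).mul_const (L / 2 * ‖d‖ ^ 2)
    have h5 := (h2.sub h3).sub h4
    refine HasDerivAt.congr_deriv (f := h) h5 ?_
    simp
  have hanti : AntitoneOn h (Set.Icc 0 1) := by
    apply antitoneOn_of_deriv_nonpos (convex_Icc 0 1)
    · exact fun t _ => (hder t).continuousAt.continuousWithinAt
    · exact fun t _ => (hder t).differentiableAt.differentiableWithinAt
    · intro t ht
      rw [interior_Icc] at ht
      rw [(hder t).deriv, ← inner_sub_left]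
      have h1 := real_inner_le_norm (gradient g (x + t • d) - gradient g x) d
      have h2 := hlip (x + t • d) x
      rw [add_sub_cancel_left, norm_smul, Real.norm_eq_abs, abs_of_pos ht.1] at h2
      have h3 := mul_le_mul_of_nonneg_right h2 (norm_nonneg d)
      nlinarith
  have := hanti (Set.left_mem_Icc.2 zero_le_one) (Set.right_mem_Icc.2 zero_le_one) zero_le_one
  simp only [h, one_smul, zero_smul, add_zero] at this
  have hy : x + d = y := by simp [hd]
  rw [hy] at this
  linarith

theorem prox_finite_aux {E : Type*} [NormedAddCommGroup E]
    (γ : E → ℝ≥0∞) (hproper : ∃ x, γ x ≠ ⊤) (η : ℝ) (hη : 0 < η) (x p : E)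
    (h : IsProxPt γ η x p) : γ p ≠ ⊤ := by
  obtain ⟨u, hu⟩ := hproper
  intro hp
  have h1 := h u
  rw [hp, ENNReal.mul_top (by simpa using hη), top_add, top_le_iff] at h1
  exact (ENNReal.add_ne_top.2 ⟨ENNReal.mul_ne_top ENNReal.ofReal_ne_top hu,
    ENNReal.ofReal_ne_top⟩) h1

theorem prox_three_aux {E : Type*} [NormedAddCommGroup E] [InnerProductSpace ℝ E]
    (γ : E → ℝ≥0∞) (hconv : ConvexFnENN γ) (η : ℝ) (hη : 0 < η) (W V p z : E)
    (h : IsProxPt γ η (W - η • V) p) (hp : γ p ≠ ⊤) (hz : γ z ≠ ⊤) :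
    (γ p).toReal ≤ (γ z).toReal + ⟪V, z - p⟫
      + 1 / (2 * η) * (‖z - W‖ ^ 2 - ‖p - W‖ ^ 2 - ‖p - z‖ ^ 2) := by
  have h1 := prox_ineq_aux γ hconv η hη _ p z h hp hz
  have e1 : p - (W - η • V) = (p - W) + η • V := by module
  rw [e1, inner_add_left, real_inner_smul_left] at h1
  have e2 : z - W = (p - W) + (z - p) := by module
  have e3 := norm_add_sq_real (p - W) (z - p)
  rw [← e2, norm_sub_rev z p] at e3
  have e4 : ‖z - W‖ ^ 2 - ‖p - W‖ ^ 2 - ‖p - z‖ ^ 2 = 2 * ⟪p - W, z - p⟫ := by linarith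
  rw [e4]
  have e5 : 1 / (2 * η) * (2 * ⟪p - W, z - p⟫) = ⟪p - W, z - p⟫ / η := by field_simp
  rw [e5]
  have e6 : η * (⟪p - W, z - p⟫ / η) = ⟪p - W, z - p⟫ := by field_simp
  refine le_of_mul_le_mul_left ?_ hη
  linarith

/-- Key recursion inequality: bound on `f′(W⁺)` after a proximal step
with search direction `V`, compared with the exact proximal-gradient point `W̃`. -/
theorem prox_step_descent_bound {E : Type*}
    [NormedAddCommGroup E] [InnerProductSpace ℝ E] [CompleteSpace E]
    (g : E → ℝ) (ψ' : E → ℝ≥0∞) (L : ℝ) (hL : 0 ≤ L)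
    (hdiff : Differentiable ℝ g)
    (hlip : ∀ a b : E, ‖gradient g a - gradient g b‖ ≤ L * ‖a - b‖)
    (hconv : ConvexFnENN ψ') (hproper : ∃ x, ψ' x ≠ ⊤) (hclosed : LowerSemicontinuous ψ')
    (η : ℝ) (hη : 0 < η) (W V Wplus Wtilde : E)
    (hWplus : IsProxPt ψ' η (W - η • V) Wplus)
    (hWtilde : IsProxPt ψ' η (W - η • gradient g W) Wtilde) :
    (g Wplus : EReal) + (ψ' Wplus : EReal)
      ≤ (g W : EReal) + (ψ' W : EReal)
        + ((⟪Wplus - Wtilde, gradient g W - V⟫ + (L / 2 - 1 / (2 * η)) * ‖Wplus - W‖ ^ 2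
            + (L - 1 / (2 * η)) * ‖Wtilde - W‖ ^ 2
            - (1 / (2 * η)) * ‖Wplus - Wtilde‖ ^ 2 : ℝ) : EReal) := by
  by_cases hW : ψ' W = ⊤
  · rw [hW, EReal.coe_ennreal_top, EReal.coe_add_top, EReal.top_add_coe]
    exact le_top
  have hp := prox_finite_aux ψ' hproper η hη _ _ hWplus
  have ht := prox_finite_aux ψ' hproper η hη _ _ hWtilde
  have h1 := prox_three_aux ψ' hconv η hη _ _ _ Wtilde hWplus hp ht
  have h2 := prox_three_aux ψ' hconv η hη _ _ _ W hWtilde ht hW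
  have h3 := descent_aux g L hdiff hlip W Wplus
  have hLn : 0 ≤ L * ‖Wtilde - W‖ ^ 2 := by positivity
  rw [← EReal.coe_ennreal_toReal hp, ← EReal.coe_ennreal_toReal hW]
  norm_cast
  rw [sub_self, norm_zero] at h2
  have e : ⟪V, Wtilde - Wplus⟫ + ⟪gradient g W, W - Wtilde⟫ + ⟪gradient g W, Wplus - W⟫
      = ⟪Wplus - Wtilde, gradient g W - V⟫ := by
    rw [real_inner_comm (gradient g W - V)]
    simp only [inner_sub_left, inner_sub_right]
    ring
  rw [← e]
  linarith
end
end
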